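/- arXiv:2307.06306 — 7 statements merged into one kernel-verified Lean document; each statement's English description precedes it below -/
import Mathlib

section
/- Comparison of heterogeneity measures, part (b) (Proposition 4.1(b)): σ*² ≤ 2 L σ_f², i.e. (1/n) Σ_{i=1}^n E_{ξ∼D_i} ‖∇F_i(x*, ξ) − ∇f_i(x*)‖² ≤ 2L · (1/n) Σ_{i=1}^n (f_i(x*) − ℓ_i*). -/
open MeasureTheory Finset

theorem grad_sq_le_aux {d : ℕ} (G : EuclideanSpace ℝ (Fin d) → ℝ) (L : ℝ) (hL : 0 < L)
    (hd : Differentiable ℝ G)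
    (hs : ∀ x y : EuclideanSpace ℝ (Fin d), ‖gradient G x - gradient G y‖ ≤ L * ‖x - y‖)
    (l : ℝ) (hl : ∀ x, l ≤ G x) (x : EuclideanSpace ℝ (Fin d)) :
    ‖gradient G x‖ ^ 2 ≤ 2 * L * (G x - l) := by
  set v : EuclideanSpace ℝ (Fin d) := (-L⁻¹) • gradient G x with hv
  have hder : ∀ t : ℝ, HasDerivAt
      (fun t : ℝ => G (x + t • v) - t * inner ℝ (gradient G x) v - L * ‖v‖ ^ 2 / 2 * t ^ 2)
      (inner ℝ (gradient G (x + t • v)) v - inner ℝ (gradient G x) v - L * ‖v‖ ^ 2 * t) t := by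
    intro t
    have h1 : HasDerivAt (fun t : ℝ => x + t • v) v t := by
      simpa using ((hasDerivAt_id t).smul_const v).const_add x
    have h2 := (hd (x + t • v)).hasGradientAt.hasFDerivAt.comp_hasDerivAt t h1
    have h3 := (h2.sub ((hasDerivAt_id t).mul_const (inner ℝ (gradient G x) v))).sub
      ((hasDerivAt_pow 2 t).const_mul (L * ‖v‖ ^ 2 / 2))
    refine h3.congr_deriv ?_
    simp
    ring
  have hanti : AntitoneOn
      (fun t : ℝ => G (x + t • v) - t * inner ℝ (gradient G x) v - L * ‖v‖ ^ 2 / 2 * t ^ 2)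
      (Set.Ici 0) := by
    apply antitoneOn_of_deriv_nonpos (convex_Ici 0)
    · exact fun t _ => (hder t).continuousAt.continuousWithinAt
    · exact fun t _ => (hder t).differentiableAt.differentiableWithinAt
    · intro t ht
      rw [interior_Ici, Set.mem_Ioi] at ht
      rw [(hder t).deriv, ← inner_sub_left]
      have h1 := real_inner_le_norm (gradient G (x + t • v) - gradient G x) v
      have h2 := hs (x + t • v) x
      rw [add_sub_cancel_left, norm_smul, Real.norm_of_nonneg ht.le] at h2
      have h3 := mul_le_mul_of_nonneg_right h2 (norm_nonneg v)
      nlinarith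
  have h := hanti (Set.mem_Ici.2 le_rfl) (Set.mem_Ici.2 zero_le_one) zero_le_one
  simp only [one_smul, zero_smul, add_zero] at h
  have hi : inner ℝ (gradient G x) v = -L⁻¹ * ‖gradient G x‖ ^ 2 := by
    rw [hv, real_inner_smul_right, real_inner_self_eq_norm_sq]
  have hnv : ‖v‖ ^ 2 = L⁻¹ ^ 2 * ‖gradient G x‖ ^ 2 := by
    rw [hv, norm_smul, mul_pow, norm_neg, Real.norm_of_nonneg (inv_nonneg.2 hL.le)]
  rw [hi, hnv] at h
  have h5 := hl (x + v)
  have h6 : L⁻¹ * ‖gradient G x‖ ^ 2 / 2 ≤ G x - l := by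
    have : L * (L⁻¹ ^ 2 * ‖gradient G x‖ ^ 2) = L⁻¹ * ‖gradient G x‖ ^ 2 := by
      field_simp
    rw [this] at h
    linarith
  have h7 := mul_le_mul_of_nonneg_left h6 (by positivity : 0 ≤ 2 * L)
  calc ‖gradient G x‖ ^ 2 = 2 * L * (L⁻¹ * ‖gradient G x‖ ^ 2 / 2) := by field_simp
    _ ≤ _ := h7

theorem variance_le_aux {Ω E : Type*} [MeasurableSpace Ω] [NormedAddCommGroup E]
    [InnerProductSpace ℝ E] [CompleteSpace E]
    (μ : Measure Ω) [IsProbabilityMeasure μ] (g : Ω → E) (b : Ω → ℝ) (hb : Integrable b μ)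
    (hgb : ∀ ω, ‖g ω‖ ^ 2 ≤ b ω) :
    ∫ ω, ‖g ω - ∫ η, g η ∂μ‖ ^ 2 ∂μ ≤ ∫ ω, b ω ∂μ := by
  by_cases hg : Integrable g μ
  · have hsq : Integrable (fun ω => ‖g ω‖ ^ 2) μ := by
      refine hb.mono' (hg.aestronglyMeasurable.norm.pow 2) (Filter.Eventually.of_forall fun ω => ?_)
      rw [Real.norm_of_nonneg (by positivity)]
      exact hgb ω
    set m := ∫ η, g η ∂μ with hm
    have hin : Integrable (fun ω => inner ℝ m (g ω)) μ := hg.const_inner m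
    have e : ∫ ω, ‖g ω - m‖ ^ 2 ∂μ = ∫ ω, ‖g ω‖ ^ 2 ∂μ - ‖m‖ ^ 2 := by
      have e1 : ∀ ω, ‖g ω - m‖ ^ 2 = ‖g ω‖ ^ 2 - 2 * inner ℝ m (g ω) + ‖m‖ ^ 2 := fun ω => by
        rw [norm_sub_sq_real, real_inner_comm]
      simp_rw [e1]
      have hs2 : Integrable (fun ω => ‖g ω‖ ^ 2 - 2 * inner ℝ m (g ω)) μ :=
        hsq.sub (hin.const_mul 2)
      rw [integral_add hs2 (integrable_const _),
        integral_sub hsq (hin.const_mul 2), integral_const_mul, integral_inner hg, ← hm,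
        real_inner_self_eq_norm_sq]
      simp
      ring
    rw [e]
    have := integral_mono hsq hb hgb
    have := sq_nonneg ‖m‖
    linarith
  · rw [integral_undef hg]
    simp only [sub_zero]
    exact integral_mono_of_nonneg (Filter.Eventually.of_forall fun ω => by positivity) hb
      (Filter.Eventually.of_forall hgb)

/-- **Comparison of heterogeneity measures, part (b) (Proposition 4.1(b)):** σ*² ≤ 2Lσ_f². -/
theorem heterogeneity_comparison_b
    {d n : ℕ} (hn : 0 < n)
    {Ξ : Fin n → Type*} [∀ i, MeasurableSpace (Ξ i)]
    (D : ∀ i, Measure (Ξ i)) [∀ i, IsProbabilityMeasure (D i)]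
    (F : ∀ i, Ξ i → EuclideanSpace ℝ (Fin d) → ℝ)
    (L : ℝ) (hL : 0 < L)
    (hdiff : ∀ i ξ, Differentiable ℝ (F i ξ))
    (hsmooth : ∀ i ξ (x y : EuclideanSpace ℝ (Fin d)),
      ‖gradient (F i ξ) x - gradient (F i ξ) y‖ ≤ L * ‖x - y‖)
    (hbdd : ∀ i ξ, BddBelow (Set.range (F i ξ)))
    (ℓ : Fin n → ℝ) (hℓ : ∀ i ξ x, ℓ i ≤ F i ξ x)
    (f : Fin n → EuclideanSpace ℝ (Fin d) → ℝ)
    (hf : ∀ i x, f i x = ∫ ξ, F i ξ x ∂(D i))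
    (hfint : ∀ i x, Integrable (fun ξ => F i ξ x) (D i))
    (hgrad : ∀ i x, gradient (f i) x = ∫ ξ, gradient (F i ξ) x ∂(D i))
    (xstar : EuclideanSpace ℝ (Fin d))
    (hxstar : ∀ y, (n : ℝ)⁻¹ * ∑ i, f i xstar ≤ (n : ℝ)⁻¹ * ∑ i, f i y) :
    (n : ℝ)⁻¹ * ∑ i, (∫ ξ, ‖gradient (F i ξ) xstar - gradient (f i) xstar‖ ^ 2 ∂(D i))
      ≤ 2 * L * ((n : ℝ)⁻¹ * ∑ i, (f i xstar - ℓ i)) := by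
  rw [← mul_assoc, mul_comm (2 * L), mul_assoc]
  refine mul_le_mul_of_nonneg_left ?_ (by positivity)
  rw [Finset.mul_sum]
  refine Finset.sum_le_sum fun i _ => ?_
  rw [hgrad i xstar]
  have hi : Integrable (fun ξ => 2 * L * (F i ξ xstar - ℓ i)) (D i) :=
    ((hfint i xstar).sub (integrable_const _)).const_mul _
  refine (variance_le_aux (D i) (fun ξ => gradient (F i ξ) xstar) _ hi fun ξ =>
    grad_sq_le_aux (F i ξ) L hL (hdiff i ξ) (hsmooth i ξ) (ℓ i) (hℓ i ξ) xstar).trans_eq ?_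
  rw [integral_const_mul, integral_sub (hfint i xstar) (integrable_const _), hf i xstar]
  simp
end

section
/- Difference lemma for FedSPS, convex case with any stepsizes (Lemma B.3, deterministic form): Let n ≥ 1, τ ≥ 1, c ≥ 2τ², γ_b > 0, and let t_0 ≤ t with t − t_0 ≤ τ. For each client i ∈ {1,…,n} and each j ∈ {t_0,…,t−1}, let F_{i,j} : ℝ^d → ℝ be differentiable with F_{i,j}(x) ≥ ℓ_i* for all x. Suppose x_{t_0}^i = y for all i (a common point), and for j = t_0, …, t−1 the iterates evolve by x_{j+1}^i = x_j^i − γ_j^i g_j^i, where g_j^i := ∇F_{i,j}(x_j^i) and γ_j^i := min{(F_{i,j}(x_j^i) − ℓ_i*)/(c‖g_j^i‖²), γ_b} (set γ_j^i := γ_b if g_j^i = 0). Then with x̄_t := (1/n)Σ_{i=1}^n x_t^i it holds that (1/n) Σ_{i=1}^n ‖x̄_t − x_t^i‖² ≤ (1/(2nτ)) Σ_{i=1}^n Σ_{j=t_0}^{t−1} γ_j^i (F_{i,j}(x_j^i) − ℓ_i*). -/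
open Finset

lemma var_le_aux {E : Type*} [NormedAddCommGroup E] [InnerProductSpace ℝ E] {n : ℕ}
    (hn : 1 ≤ n) (z : Fin n → E) (y : E) :
    ∑ i, ‖((n : ℝ)⁻¹ • ∑ k, z k) - z i‖ ^ 2 ≤ ∑ i, ‖z i - y‖ ^ 2 := by
  have hn0 : (n : ℝ) ≠ 0 := by positivity
  set m := (n : ℝ)⁻¹ • ∑ k, z k with hm
  have hs : ∑ i, (z i - m) = 0 := by
    rw [Finset.sum_sub_distrib, hm]
    simp only [Finset.sum_const, Finset.card_univ, Fintype.card_fin]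
    rw [← Nat.cast_smul_eq_nsmul ℝ, smul_smul, mul_inv_cancel₀ hn0, one_smul, sub_self]
  have h : ∀ i, ‖z i - y‖ ^ 2
      = ‖m - z i‖ ^ 2 + 2 * inner ℝ (z i - m) (m - y) + ‖m - y‖ ^ 2 := by
    intro i
    rw [norm_sub_rev m (z i), ← norm_add_sq_real, sub_add_sub_cancel]
  simp_rw [h, Finset.sum_add_distrib]
  rw [← Finset.mul_sum, ← sum_inner, hs, inner_zero_left]
  have : 0 ≤ ∑ i : Fin n, ‖m - y‖ ^ 2 := by positivity
  linarith

open scoped Classical in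
/-- **Difference lemma for FedSPS, convex case with any stepsizes (Lemma B.3).** -/
theorem fedsps_difference_lemma
    {d n : ℕ} (hn : 1 ≤ n) (τ : ℕ) (hτ : 1 ≤ τ)
    (c γb : ℝ) (hc : (2 * τ ^ 2 : ℝ) ≤ c) (hγb : 0 < γb)
    (t0 t : ℕ) (ht0 : t0 ≤ t) (ht : t - t0 ≤ τ)
    (F : Fin n → ℕ → EuclideanSpace ℝ (Fin d) → ℝ)
    (hdiff : ∀ i j, Differentiable ℝ (F i j))
    (ℓ : Fin n → ℝ) (hℓ : ∀ i j x, ℓ i ≤ F i j x)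
    (y : EuclideanSpace ℝ (Fin d))
    (x : ℕ → Fin n → EuclideanSpace ℝ (Fin d))
    (hxy : ∀ i, x t0 i = y)
    (γ : ℕ → Fin n → ℝ)
    (hγ : ∀ j i, γ j i =
      if gradient (F i j) (x j i) = 0 then γb
      else min ((F i j (x j i) - ℓ i) / (c * ‖gradient (F i j) (x j i)‖ ^ 2)) γb)
    (hx : ∀ j i, t0 ≤ j → j < t →
      x (j + 1) i = x j i - γ j i • gradient (F i j) (x j i)) :
    (n : ℝ)⁻¹ * ∑ i, ‖((n : ℝ)⁻¹ • ∑ k, x t k) - x t i‖ ^ 2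
      ≤ (1 / (2 * n * τ)) * ∑ i, ∑ j ∈ Finset.Ico t0 t, γ j i * (F i j (x j i) - ℓ i) := by
  have hτ' : (1 : ℝ) ≤ τ := by exact_mod_cast hτ
  have hc0 : 0 < c := by nlinarith
  have hδ : ∀ i j, 0 ≤ F i j (x j i) - ℓ i := fun i j => sub_nonneg.2 (hℓ i j _)
  have hγ0 : ∀ j i, 0 ≤ γ j i := by
    intro j i
    rw [hγ]
    split_ifs
    · exact hγb.le
    · exact le_min (div_nonneg (hδ i j) (by positivity)) hγb.le
  have hstep : ∀ j i, c * ‖γ j i • gradient (F i j) (x j i)‖ ^ 2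
      ≤ γ j i * (F i j (x j i) - ℓ i) := by
    intro j i
    by_cases hg : gradient (F i j) (x j i) = 0
    · rw [hg]
      simpa using mul_nonneg (hγ0 j i) (hδ i j)
    · have hpos : 0 < ‖gradient (F i j) (x j i)‖ := norm_pos_iff.2 hg
      have h1 : γ j i ≤ (F i j (x j i) - ℓ i) / (c * ‖gradient (F i j) (x j i)‖ ^ 2) := by
        rw [hγ, if_neg hg]
        exact min_le_left _ _
      rw [le_div_iff₀ (by positivity)] at h1
      rw [norm_smul, mul_pow, Real.norm_eq_abs, sq_abs]
      nlinarith [mul_le_mul_of_nonneg_left h1 (hγ0 j i)]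
  have htel : ∀ i, ∀ s, t0 ≤ s → s ≤ t →
      y - x s i = ∑ j ∈ Finset.Ico t0 s, γ j i • gradient (F i j) (x j i) := by
    intro i s hs
    induction s, hs using Nat.le_induction with
    | base => intro _; simp [hxy]
    | succ k hk ih =>
      intro hkt
      rw [Finset.sum_Ico_succ_top hk, ← ih (by omega), hx k i hk (by omega)]
      abel
  have hclient : ∀ i, ‖x t i - y‖ ^ 2
      ≤ (1 / (2 * τ)) * ∑ j ∈ Finset.Ico t0 t, γ j i * (F i j (x j i) - ℓ i) := by
    intro i
    rw [norm_sub_rev, htel i t ht0 le_rfl]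
    set G := fun j => ‖γ j i • gradient (F i j) (x j i)‖ with hG
    have h1 : ‖∑ j ∈ Finset.Ico t0 t, γ j i • gradient (F i j) (x j i)‖ ^ 2
        ≤ (∑ j ∈ Finset.Ico t0 t, G j) ^ 2 := by
      gcongr
      exact norm_sum_le _ _
    have h2 := sq_sum_le_card_mul_sum_sq (s := Finset.Ico t0 t) (f := G)
    rw [Nat.card_Ico] at h2
    have h3 : ((t - t0 : ℕ) : ℝ) ≤ τ := by exact_mod_cast ht
    have hS : 0 ≤ ∑ j ∈ Finset.Ico t0 t, G j ^ 2 := by positivity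
    have h4 : c * ∑ j ∈ Finset.Ico t0 t, G j ^ 2
        ≤ ∑ j ∈ Finset.Ico t0 t, γ j i * (F i j (x j i) - ℓ i) := by
      rw [Finset.mul_sum]
      exact Finset.sum_le_sum fun j _ => hstep j i
    have h5 := mul_le_mul_of_nonneg_right h3 hS
    have h6 := mul_le_mul_of_nonneg_right hc hS
    refine (h1.trans (h2.trans h5)).trans ?_
    rw [one_div, inv_mul_eq_div, le_div_iff₀ (by positivity)]
    nlinarith
  have hfin := (var_le_aux hn (x t) y).trans (Finset.sum_le_sum fun i _ => hclient i)
  rw [← Finset.mul_sum] at hfin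
  have hn' : (0 : ℝ) < n := by exact_mod_cast hn
  refine (mul_le_mul_of_nonneg_left hfin (by positivity : (0 : ℝ) ≤ (n : ℝ)⁻¹)).trans (le_of_eq ?_)
  rw [← mul_assoc]
  congr 1
  field_simp
end

section
/- Client-drift recursion for small stepsizes (key inequality in Lemma B.4): Let n ≥ 1, τ ≥ 1, L > 0 and 0 < γ_b ≤ 1/(10Lτ). For each i ∈ {1,…,n} let G_i : ℝ^d → ℝ be differentiable and L-smooth, let x_t^1, …, x_t^n ∈ ℝ^d with average x̄_t := (1/n)Σ_i x_t^i and drift R_t := (1/n)Σ_i‖x̄_t − x_t^i‖², and let x_{t+1}^i := x_t^i − γ_t^i ∇G_i(x_t^i) with stepsizes 0 ≤ γ_t^i ≤ γ_b. Then R_{t+1} := (1/n)Σ_i‖x̄_{t+1} − x_t^i + γ_t^i∇G_i(x_t^i)‖²-style drift of the updated points, namely R_{t+1} = (1/n)Σ_i‖x̄_{t+1} − x_{t+1}^i‖² with x̄_{t+1} = (1/n)Σ_i x_{t+1}^i, satisfies R_{t+1} ≤ (1 + 2/τ) R_t + (4τγ_b²/n) Σ_{i=1}^n ‖∇G_i(x̄_t)‖².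 -/
open Finset

lemma mean_min_aux {E : Type*} [NormedAddCommGroup E] [InnerProductSpace ℝ E] {n : ℕ}
    (hn : 1 ≤ n) (y : Fin n → E) (c : E) :
    ∑ i, ‖((n : ℝ)⁻¹ • ∑ k, y k) - y i‖ ^ 2 ≤ ∑ i, ‖c - y i‖ ^ 2 := by
  set m : E := (n : ℝ)⁻¹ • ∑ k, y k with hm
  have hn0 : (n : ℝ) ≠ 0 := by positivity
  have h0 : ∑ i, (m - y i) = 0 := by
    rw [Finset.sum_sub_distrib, Finset.sum_const, Finset.card_univ, Fintype.card_fin,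
      ← Nat.cast_smul_eq_nsmul ℝ, hm, smul_smul, mul_inv_cancel₀ hn0, one_smul, sub_self]
  have h1 : ∀ i, ‖c - y i‖ ^ 2 =
      ‖c - m‖ ^ 2 + 2 * inner ℝ (c - m) (m - y i) + ‖m - y i‖ ^ 2 := by
    intro i
    rw [← norm_add_sq_real, sub_add_sub_cancel]
  have h2 : ∑ i, inner ℝ (c - m) (m - y i) = 0 := by
    rw [← inner_sum, h0, inner_zero_right]
  simp_rw [h1]
  rw [Finset.sum_add_distrib, Finset.sum_add_distrib, ← Finset.mul_sum, h2]
  have : 0 ≤ ∑ i : Fin n, ‖c - m‖ ^ 2 := Finset.sum_nonneg fun i _ => by positivity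
  linarith

lemma scalar_aux (t a q s N : ℝ) (ht : 1 ≤ t) (ha : 0 ≤ a) (hq : 0 ≤ q) (hs : 0 ≤ s)
    (hst : s ≤ 1 / (10 * t)) (hN0 : 0 ≤ N) (hN : N ≤ (1 + s) * a + q) :
    N ^ 2 ≤ (1 + 2 / t) * a ^ 2 + 4 * t * q ^ 2 := by
  have ht0 : 0 < t := by linarith
  obtain ⟨u, hu⟩ : ∃ u, u = 1 / t := ⟨_, rfl⟩
  have hut : u * t = 1 := by rw [hu]; field_simp
  have hu0 : 0 < u := by rw [hu]; positivity
  have hu1 : u ≤ 1 := by nlinarith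
  have hsu : s ≤ u / 10 := by
    have : 1 / (10 * t) = u / 10 := by rw [hu]; field_simp
    linarith
  have h2t : 2 / t = 2 * u := by rw [hu]; ring
  rw [h2t]
  have hp : (1 + s) * a ≤ (1 + u / 10) * a := by gcongr
  obtain ⟨p, hpd⟩ : ∃ p, p = (1 + u / 10) * a := ⟨_, rfl⟩
  have hNp : N ^ 2 ≤ (p + q) ^ 2 := by
    apply pow_le_pow_left₀ hN0; linarith
  have hy : 2 * p * q ≤ p ^ 2 * (u / 3) + 3 * t * q ^ 2 := by
    have h : 0 ≤ u / 3 * (p - 3 * t * q) ^ 2 := by positivity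
    have e : u / 3 * (p - 3 * t * q) ^ 2 =
        p ^ 2 * (u / 3) - 2 * (u * t) * p * q + 3 * (u * t) * t * q ^ 2 := by ring
    rw [e, hut] at h
    linarith
  have hc : (1 + u / 3) * (1 + u / 10) ^ 2 ≤ 1 + 2 * u := by nlinarith [mul_pos hu0 hu0, mul_nonneg hu0.le (sub_nonneg.2 hu1), mul_nonneg (mul_pos hu0 hu0).le (sub_nonneg.2 hu1)]
  have h3 : (1 + u / 3) * p ^ 2 ≤ (1 + 2 * u) * a ^ 2 := by
    calc (1 + u / 3) * p ^ 2 = (1 + u / 3) * (1 + u / 10) ^ 2 * a ^ 2 := by rw [hpd]; ring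
      _ ≤ _ := by gcongr
  have h4 : q ^ 2 ≤ t * q ^ 2 := le_mul_of_one_le_left (sq_nonneg q) ht
  nlinarith

/-- **Client-drift recursion for small stepsizes (key inequality in Lemma B.4).** -/
theorem client_drift_recursion
    {d n : ℕ} (hn : 1 ≤ n) (τ : ℕ) (hτ : 1 ≤ τ)
    (L γb : ℝ) (hL : 0 < L) (hγb : 0 < γb) (hγbsmall : γb ≤ 1 / (10 * L * τ))
    (G : Fin n → EuclideanSpace ℝ (Fin d) → ℝ)
    (hdiff : ∀ i, Differentiable ℝ (G i))
    (hsmooth : ∀ i (x y : EuclideanSpace ℝ (Fin d)),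
      ‖gradient (G i) x - gradient (G i) y‖ ≤ L * ‖x - y‖)
    (xt : Fin n → EuclideanSpace ℝ (Fin d))
    (γ : Fin n → ℝ) (hγ : ∀ i, 0 ≤ γ i ∧ γ i ≤ γb)
    (xt1 : Fin n → EuclideanSpace ℝ (Fin d))
    (hxt1 : ∀ i, xt1 i = xt i - γ i • gradient (G i) (xt i))
    (xbar : EuclideanSpace ℝ (Fin d)) (hxbar : xbar = (n : ℝ)⁻¹ • ∑ i, xt i) :
    (n : ℝ)⁻¹ * ∑ i, ‖((n : ℝ)⁻¹ • ∑ k, xt1 k) - xt1 i‖ ^ 2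
      ≤ (1 + 2 / τ) * ((n : ℝ)⁻¹ * ∑ i, ‖xbar - xt i‖ ^ 2)
        + (4 * τ * γb ^ 2 / n) * ∑ i, ‖gradient (G i) xbar‖ ^ 2 := by
  have hτ' : (1 : ℝ) ≤ τ := by exact_mod_cast hτ
  have hτ0 : (0 : ℝ) < τ := by linarith
  have hs : γb * L ≤ 1 / (10 * (τ : ℝ)) := by
    calc γb * L ≤ 1 / (10 * L * τ) * L := by gcongr
      _ = _ := by field_simp
  have key : ∀ i, ‖xbar - xt1 i‖ ^ 2 ≤
      (1 + 2 / (τ : ℝ)) * ‖xbar - xt i‖ ^ 2 + 4 * τ * (γb * ‖gradient (G i) xbar‖) ^ 2 := by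
    intro i
    apply scalar_aux τ _ _ (γb * L) _ hτ' (norm_nonneg _) (by positivity) (by positivity) hs
      (norm_nonneg _)
    have e : xbar - xt1 i = (xbar - xt i) + γ i • gradient (G i) (xt i) := by
      rw [hxt1]; abel
    have hg : ‖gradient (G i) (xt i)‖ ≤ L * ‖xbar - xt i‖ + ‖gradient (G i) xbar‖ := by
      have h1 := hsmooth i (xt i) xbar
      rw [norm_sub_rev (xt i) xbar] at h1
      have h2 := norm_sub_norm_le (gradient (G i) (xt i)) (gradient (G i) xbar)
      linarith
    calc ‖xbar - xt1 i‖ ≤ ‖xbar - xt i‖ + ‖γ i • gradient (G i) (xt i)‖ := by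
          rw [e]; exact norm_add_le _ _
      _ = ‖xbar - xt i‖ + γ i * ‖gradient (G i) (xt i)‖ := by
          rw [norm_smul, Real.norm_of_nonneg (hγ i).1]
      _ ≤ ‖xbar - xt i‖ + γb * (L * ‖xbar - xt i‖ + ‖gradient (G i) xbar‖) := by
          have := mul_le_mul (hγ i).2 hg (norm_nonneg _) hγb.le
          linarith
      _ = _ := by ring
  calc (n : ℝ)⁻¹ * ∑ i, ‖((n : ℝ)⁻¹ • ∑ k, xt1 k) - xt1 i‖ ^ 2
      ≤ (n : ℝ)⁻¹ * ∑ i, ((1 + 2 / (τ : ℝ)) * ‖xbar - xt i‖ ^ 2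
          + 4 * τ * (γb * ‖gradient (G i) xbar‖) ^ 2) := by
        apply mul_le_mul_of_nonneg_left _ (by positivity)
        exact (mean_min_aux hn xt1 xbar).trans (Finset.sum_le_sum fun i _ => key i)
    _ = _ := by
        simp_rw [mul_pow]
        rw [Finset.sum_add_distrib, ← Finset.mul_sum, ← Finset.mul_sum, ← Finset.mul_sum]
        ring
end

section
/- Per-step decrease inequality for FedSPS, convex case (deterministic inequality from the proof of Theorem 4.2(a)): Let n ≥ 1, c ≥ 2, γ_b > 0. For each i ∈ {1,…,n} let F_i : ℝ^d → ℝ be differentiable and convex with F_i(x) ≥ ℓ_i* for all x. Let x_t^1,…,x_t^n ∈ ℝ^d with average x̄_t := (1/n)Σ_i x_t^i and drift R_t := (1/n)Σ_i‖x̄_t − x_t^i‖², set g_t^i := ∇F_i(x_t^i), γ_t^i := min{(F_i(x_t^i) − ℓ_i*)/(c‖g_t^i‖²), γ_b} (γ_t^i := γ_b if g_t^i = 0), and x̄_{t+1} := (1/n)Σ_i (x_t^i − γ_t^i g_t^i). Then for every x* ∈ ℝ^d: ‖x̄_{t+1} − x*‖² ≤ ‖x̄_t − x*‖² − (1/n)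 Σ_{i=1}^n γ_t^i (F_i(x_t^i) − ℓ_i*) + 2 γ_b σ_t² + R_t, where σ_t² := (1/n) Σ_{i=1}^n (F_i(x*) − ℓ_i*). -/
open Finset

theorem fedsps_aux_variance {d n : ℕ} (hn : 1 ≤ n) (y : Fin n → EuclideanSpace ℝ (Fin d))
    (m z : EuclideanSpace ℝ (Fin d)) (hm : m = (n : ℝ)⁻¹ • ∑ i, y i) :
    (n : ℝ)⁻¹ * ∑ i, ‖y i - z‖ ^ 2
      = ‖m - z‖ ^ 2 + (n : ℝ)⁻¹ * ∑ i, ‖m - y i‖ ^ 2 := by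
  have hn0 : (n : ℝ) ≠ 0 := by positivity
  have h0 : ∑ i, (m - y i) = 0 := by
    rw [Finset.sum_sub_distrib, hm]
    simp only [Finset.sum_const, Finset.card_univ, Fintype.card_fin]
    rw [← Nat.cast_smul_eq_nsmul ℝ, smul_smul, mul_inv_cancel₀ hn0, one_smul, sub_self]
  have h1 : ∀ i, ‖y i - z‖ ^ 2
      = ‖m - z‖ ^ 2 - 2 * inner ℝ (m - z) (m - y i) + ‖m - y i‖ ^ 2 := by
    intro i
    rw [← norm_sub_sq_real]
    congr 2
    abel
  have h2 : ∑ i, ‖y i - z‖ ^ 2 = n * ‖m - z‖ ^ 2 + ∑ i, ‖m - y i‖ ^ 2 := by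
    rw [Finset.sum_congr rfl (fun i _ => h1 i), Finset.sum_add_distrib, Finset.sum_sub_distrib,
      ← Finset.mul_sum, ← inner_sum, h0]
    simp
  rw [h2]
  field_simp

theorem fedsps_aux_convex {d : ℕ} (f : EuclideanSpace ℝ (Fin d) → ℝ)
    (hf : Differentiable ℝ f) (hc : ConvexOn ℝ Set.univ f) (x z : EuclideanSpace ℝ (Fin d)) :
    f x - f z ≤ inner ℝ (x - z) (gradient f x) := by
  have hg : ConvexOn ℝ Set.univ (fun t : ℝ => f (AffineMap.lineMap x z t)) :=
    hc.comp_affineMap (AffineMap.lineMap x z)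
  have hd : HasDerivAt (fun t : ℝ => f (AffineMap.lineMap x z t)) (fderiv ℝ f x (z - x)) 0 := by
    have h1 : HasFDerivAt f (fderiv ℝ f x) (AffineMap.lineMap x z (0 : ℝ)) := by
      rw [AffineMap.lineMap_apply_zero]
      exact (hf x).hasFDerivAt
    exact h1.comp_hasDerivAt (0 : ℝ) AffineMap.hasDerivAt_lineMap
  have h := hg.le_slope_of_hasDerivAt (Set.mem_univ 0) (Set.mem_univ 1) one_pos hd
  rw [slope_def_field, ← toDual_gradient, InnerProductSpace.toDual_apply_apply] at h
  simp only [AffineMap.lineMap_apply_zero, AffineMap.lineMap_apply_one, sub_zero, div_one] at h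
  rw [real_inner_comm, ← neg_sub z x, inner_neg_right]
  linarith

open scoped Classical in
/-- **Per-step decrease inequality for FedSPS, convex case (from the proof of Theorem 4.2(a)).** -/
theorem fedsps_per_step_decrease
    {d n : ℕ} (hn : 1 ≤ n)
    (c γb : ℝ) (hc : (2 : ℝ) ≤ c) (hγb : 0 < γb)
    (F : Fin n → EuclideanSpace ℝ (Fin d) → ℝ)
    (hdiff : ∀ i, Differentiable ℝ (F i))
    (hconv : ∀ i, ConvexOn ℝ Set.univ (F i))
    (ℓ : Fin n → ℝ) (hℓ : ∀ i x, ℓ i ≤ F i x)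
    (xt : Fin n → EuclideanSpace ℝ (Fin d))
    (γ : Fin n → ℝ)
    (hγ : ∀ i, γ i = if gradient (F i) (xt i) = 0 then γb
      else min ((F i (xt i) - ℓ i) / (c * ‖gradient (F i) (xt i)‖ ^ 2)) γb)
    (xbar xbar1 : EuclideanSpace ℝ (Fin d))
    (hxbar : xbar = (n : ℝ)⁻¹ • ∑ i, xt i)
    (hxbar1 : xbar1 = (n : ℝ)⁻¹ • ∑ i, (xt i - γ i • gradient (F i) (xt i)))
    (xstar : EuclideanSpace ℝ (Fin d)) :
    ‖xbar1 - xstar‖ ^ 2 ≤ ‖xbar - xstar‖ ^ 2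
      - (n : ℝ)⁻¹ * ∑ i, γ i * (F i (xt i) - ℓ i)
      + 2 * γb * ((n : ℝ)⁻¹ * ∑ i, (F i xstar - ℓ i))
      + (n : ℝ)⁻¹ * ∑ i, ‖xbar - xt i‖ ^ 2 := by
  have hN : (0 : ℝ) ≤ (n : ℝ)⁻¹ := by positivity
  have hA := fedsps_aux_variance hn xt xbar xstar hxbar
  have hB := fedsps_aux_variance hn (fun i => xt i - γ i • gradient (F i) (xt i)) xbar1 xstar hxbar1
  have hB' : 0 ≤ (n : ℝ)⁻¹ * ∑ i, ‖xbar1 - (xt i - γ i • gradient (F i) (xt i))‖ ^ 2 := by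
    positivity
  have key : ∀ i, ‖xt i - γ i • gradient (F i) (xt i) - xstar‖ ^ 2
      ≤ ‖xt i - xstar‖ ^ 2 - γ i * (F i (xt i) - ℓ i) + 2 * γb * (F i xstar - ℓ i) := by
    intro i
    have hcv := fedsps_aux_convex (F i) (hdiff i) (hconv i) (xt i) xstar
    have h1 := hℓ i (xt i)
    have h2 := hℓ i xstar
    have hγi := hγ i
    set g := gradient (F i) (xt i) with hg
    have hγ0 : 0 ≤ γ i ∧ γ i ≤ γb ∧ γ i * ‖g‖ ^ 2 ≤ (F i (xt i) - ℓ i) / 2 := by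
      by_cases h : g = 0
      · rw [if_pos h] at hγi
        rw [hγi, h]
        refine ⟨hγb.le, le_rfl, ?_⟩
        simp
        linarith
      · rw [if_neg h] at hγi
        have hgp : 0 < ‖g‖ ^ 2 := by positivity
        have hcg : 0 < c * ‖g‖ ^ 2 := by positivity
        have hl : γ i ≤ (F i (xt i) - ℓ i) / (c * ‖g‖ ^ 2) := hγi ▸ min_le_left _ _
        have hr : γ i ≤ γb := hγi ▸ min_le_right _ _
        have hz : 0 ≤ γ i := by
          rw [hγi]
          exact le_min (div_nonneg (by linarith) hcg.le) hγb.le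
        refine ⟨hz, hr, ?_⟩
        rw [le_div_iff₀ hcg] at hl
        have : 0 ≤ (c - 2) * (γ i * ‖g‖ ^ 2) :=
          mul_nonneg (by linarith) (mul_nonneg hz hgp.le)
        nlinarith
    obtain ⟨a, b, e⟩ := hγ0
    have hx : xt i - γ i • g - xstar = (xt i - xstar) - γ i • g := by abel
    rw [hx, norm_sub_sq_real, inner_smul_right, norm_smul, mul_pow, Real.norm_eq_abs, sq_abs]
    have p1 := mul_le_mul_of_nonneg_left hcv a
    have p2 := mul_le_mul_of_nonneg_left e a
    have p3 := mul_le_mul_of_nonneg_right b (sub_nonneg.2 h2)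
    have p4 := mul_nonneg a (sub_nonneg.2 h1)
    nlinarith
  have hS := mul_le_mul_of_nonneg_left (Finset.sum_le_sum (fun i (_ : i ∈ Finset.univ) => key i)) hN
  rw [Finset.sum_add_distrib, Finset.sum_sub_distrib, ← Finset.mul_sum] at hS
  linarith
end

section
/- Per-step decrease inequality for small-stepsize FedSPS (deterministic inequality from the proof of Theorem 4.5(a)): Let n ≥ 1, L > 0, 0 < γ_b ≤ 1/(10L). For each i ∈ {1,…,n} let F_i : ℝ^d → ℝ be differentiable, convex and L-smooth, with F_i(x) ≥ ℓ_i* for all x. Let x_t^1,…,x_t^n ∈ ℝ^d with average x̄_t := (1/n)Σ_i x_t^i and drift R_t := (1/n)Σ_i‖x̄_t − x_t^i‖², and set x̄_{t+1} := (1/n)Σ_i (x_t^i − γ_b ∇F_i(x_t^i)). Then for every x* ∈ ℝ^d: ‖x̄_{t+1} − x*‖² ≤ ‖x̄_t − x*‖² − (2γ_b/n) Σ_{i=1}^n (F_i(x̄_t) − F_i(x*)) + 2 γ_b L R_t + (4Lγ_b²/n) Σ_{i=1}^n (F_i(x̄_t) − ℓ_i*). -/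
open Finset

theorem aux_line {d : ℕ} (f : EuclideanSpace ℝ (Fin d) → ℝ) (hf : Differentiable ℝ f)
    (x y : EuclideanSpace ℝ (Fin d)) (t : ℝ) :
    HasDerivAt (fun s : ℝ => f (AffineMap.lineMap x y s))
      (inner ℝ (gradient f (AffineMap.lineMap x y t)) (y - x)) t := by
  have h1 := (hf (AffineMap.lineMap x y t)).hasGradientAt.hasFDerivAt
  have h2 : HasDerivAt (fun s : ℝ => AffineMap.lineMap x y s) (y - x) t :=
    AffineMap.hasDerivAt_lineMap
  have h3 := h1.comp_hasDerivAt t h2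
  exact h3

theorem aux_convex {d : ℕ} (f : EuclideanSpace ℝ (Fin d) → ℝ) (hf : Differentiable ℝ f)
    (hc : ConvexOn ℝ Set.univ f) (x y : EuclideanSpace ℝ (Fin d)) :
    f x + inner ℝ (gradient f x) (y - x) ≤ f y := by
  have h := aux_line f hf x y 0
  have hc' : ConvexOn ℝ Set.univ (fun s : ℝ => f (AffineMap.lineMap x y s)) :=
    hc.comp_affineMap (AffineMap.lineMap x y)
  have := hc'.le_slope_of_hasDerivAt (Set.mem_univ 0) (Set.mem_univ 1) one_pos h
  simp [slope_def_field] at this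
  simp
  linarith

theorem aux_descent {d : ℕ} (f : EuclideanSpace ℝ (Fin d) → ℝ) (hf : Differentiable ℝ f)
    (L : ℝ) (hs : ∀ x y : EuclideanSpace ℝ (Fin d),
      ‖gradient f x - gradient f y‖ ≤ L * ‖x - y‖) (x y : EuclideanSpace ℝ (Fin d)) :
    f y ≤ f x + inner ℝ (gradient f x) (y - x) + L / 2 * ‖y - x‖ ^ 2 := by
  have hd : ∀ t : ℝ, HasDerivAt (fun s : ℝ => f (AffineMap.lineMap x y s)
      - s * inner ℝ (gradient f x) (y - x) - s ^ 2 * (L / 2 * ‖y - x‖ ^ 2))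
      (inner ℝ (gradient f (AffineMap.lineMap x y t)) (y - x)
       - 1 * inner ℝ (gradient f x) (y - x) - (2 * t) * (L / 2 * ‖y - x‖ ^ 2)) t := by
    intro t
    refine ((aux_line f hf x y t).sub ((hasDerivAt_id t).mul_const _)).sub
      (HasDerivAt.mul_const ?_ _)
    simpa using hasDerivAt_pow 2 t
  have ha := antitoneOn_of_deriv_nonpos (convex_Icc (0 : ℝ) 1)
    (fun t _ => (hd t).continuousAt.continuousWithinAt)
    (fun t _ => (hd t).differentiableAt.differentiableWithinAt) (by
      intro t ht
      rw [interior_Icc] at ht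
      rw [(hd t).deriv, one_mul, ← inner_sub_left]
      have h1 := real_inner_le_norm (gradient f (AffineMap.lineMap x y t) - gradient f x) (y - x)
      have h2 := hs (AffineMap.lineMap x y t) x
      have h3 : ‖(AffineMap.lineMap x y t : EuclideanSpace ℝ (Fin d)) - x‖ = t * ‖y - x‖ := by
        simp [AffineMap.lineMap_apply, norm_smul, abs_of_pos ht.1]
      rw [h3] at h2
      have h4 := mul_le_mul_of_nonneg_right h2 (norm_nonneg (y - x))
      nlinarith)
  have := ha (Set.left_mem_Icc.2 zero_le_one) (Set.right_mem_Icc.2 zero_le_one) zero_le_one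
  simp at this
  simp
  linarith

theorem aux_grad {d : ℕ} (f : EuclideanSpace ℝ (Fin d) → ℝ) (hf : Differentiable ℝ f)
    (L : ℝ) (hL : 0 < L) (hs : ∀ x y : EuclideanSpace ℝ (Fin d),
      ‖gradient f x - gradient f y‖ ≤ L * ‖x - y‖) (l : ℝ) (hl : ∀ x, l ≤ f x)
    (x : EuclideanSpace ℝ (Fin d)) :
    ‖gradient f x‖ ^ 2 ≤ 2 * L * (f x - l) := by
  have h := aux_descent f hf L hs x (x - L⁻¹ • gradient f x)
  have h2 := hl (x - L⁻¹ • gradient f x)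
  have e : x - L⁻¹ • gradient f x - x = -(L⁻¹ • gradient f x) := by abel
  rw [e, inner_neg_right, inner_smul_right, real_inner_self_eq_norm_sq, norm_neg, norm_smul,
    Real.norm_of_nonneg (inv_pos.2 hL).le] at h
  have h3 : l ≤ f x - L⁻¹ * ‖gradient f x‖ ^ 2 / 2 := by
    refine (h2.trans h).trans (le_of_eq ?_)
    field_simp
    ring
  have h4 : L * (L⁻¹ * ‖gradient f x‖ ^ 2) = ‖gradient f x‖ ^ 2 := by field_simp
  nlinarith

/-- **Per-step decrease inequality for small-stepsize FedSPS (from the proof of Theorem 4.5(a)).** -/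
theorem fedsps_small_stepsize_per_step_decrease
    {d n : ℕ} (hn : 1 ≤ n)
    (L γb : ℝ) (hL : 0 < L) (hγb : 0 < γb) (hγbsmall : γb ≤ 1 / (10 * L))
    (F : Fin n → EuclideanSpace ℝ (Fin d) → ℝ)
    (hdiff : ∀ i, Differentiable ℝ (F i))
    (hconv : ∀ i, ConvexOn ℝ Set.univ (F i))
    (hsmooth : ∀ i (x y : EuclideanSpace ℝ (Fin d)),
      ‖gradient (F i) x - gradient (F i) y‖ ≤ L * ‖x - y‖)
    (ℓ : Fin n → ℝ) (hℓ : ∀ i x, ℓ i ≤ F i x)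
    (xt : Fin n → EuclideanSpace ℝ (Fin d))
    (xbar xbar1 : EuclideanSpace ℝ (Fin d))
    (hxbar : xbar = (n : ℝ)⁻¹ • ∑ i, xt i)
    (hxbar1 : xbar1 = (n : ℝ)⁻¹ • ∑ i, (xt i - γb • gradient (F i) (xt i)))
    (xstar : EuclideanSpace ℝ (Fin d)) :
    ‖xbar1 - xstar‖ ^ 2 ≤ ‖xbar - xstar‖ ^ 2
      - 2 * γb / n * ∑ i, (F i xbar - F i xstar)
      + 2 * γb * L * ((n : ℝ)⁻¹ * ∑ i, ‖xbar - xt i‖ ^ 2)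
      + 4 * L * γb ^ 2 / n * ∑ i, (F i xbar - ℓ i) := by
  have hn0 : (0 : ℝ) < n := by exact_mod_cast hn
  have hγL : γb * L ≤ 1 / 10 := by
    rw [le_div_iff₀ (by positivity)] at hγbsmall
    linarith
  set g : Fin n → EuclideanSpace ℝ (Fin d) := fun i => gradient (F i) (xt i) with hg
  have e1 : xbar1 - xstar = (xbar - xstar) - (γb * (n : ℝ)⁻¹) • ∑ i, g i := by
    rw [hxbar1, hxbar, Finset.sum_sub_distrib, ← Finset.smul_sum, smul_sub, smul_smul,
      mul_comm γb]
    abel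
  have e2 : ‖xbar1 - xstar‖ ^ 2 = ‖xbar - xstar‖ ^ 2
      - 2 * (γb * (n : ℝ)⁻¹) * ∑ i, inner ℝ (xbar - xstar) (g i)
      + (γb * (n : ℝ)⁻¹) ^ 2 * ‖∑ i, g i‖ ^ 2 := by
    rw [e1, norm_sub_sq_real, inner_smul_right, inner_sum, norm_smul, mul_pow, Real.norm_eq_abs,
      sq_abs]
    ring
  have e3 : ‖∑ i, g i‖ ^ 2 ≤ n * ∑ i, ‖g i‖ ^ 2 := by
    have h1 : ‖∑ i, g i‖ ^ 2 ≤ (∑ i, ‖g i‖) ^ 2 := by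
      gcongr
      exact norm_sum_le _ _
    have h2 := sq_sum_le_card_mul_sum_sq (s := Finset.univ) (f := fun i => ‖g i‖)
    simp at h2
    exact h1.trans h2
  have e4 : (γb * (n : ℝ)⁻¹) ^ 2 * ‖∑ i, g i‖ ^ 2 ≤ (n : ℝ)⁻¹ * ∑ i, γb ^ 2 * ‖g i‖ ^ 2 := by
    refine (mul_le_mul_of_nonneg_left e3 (by positivity)).trans (le_of_eq ?_)
    rw [← Finset.mul_sum]
    field_simp
  have key : ∀ i, -(2 * γb) * inner ℝ (xbar - xstar) (g i) + γb ^ 2 * ‖g i‖ ^ 2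
      ≤ -(2 * γb) * (F i xbar - F i xstar) + 2 * γb * L * ‖xbar - xt i‖ ^ 2
        + 4 * L * γb ^ 2 * (F i xbar - ℓ i) := by
    intro i
    have h1 := aux_descent (F i) (hdiff i) L (hsmooth i) (xt i) xbar
    have h2 := aux_convex (F i) (hdiff i) (hconv i) (xt i) xstar
    have h3 := aux_grad (F i) (hdiff i) L hL (hsmooth i) (ℓ i) (hℓ i) xbar
    have h4 : ‖g i‖ ^ 2 ≤ 2 * (L * ‖xbar - xt i‖) ^ 2 + 2 * ‖gradient (F i) xbar‖ ^ 2 := by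
      have a1 := hsmooth i (xt i) xbar
      rw [norm_sub_rev (xt i)] at a1
      have a2 : ‖g i‖ ≤ L * ‖xbar - xt i‖ + ‖gradient (F i) xbar‖ := by
        have := norm_le_norm_sub_add (g i) (gradient (F i) xbar)
        simp only [hg] at this ⊢
        linarith
      have a3 := pow_le_pow_left₀ (norm_nonneg _) a2 2
      nlinarith [sq_nonneg (L * ‖xbar - xt i‖ - ‖gradient (F i) xbar‖)]
    have h5 : F i xbar - F i xstar - L / 2 * ‖xbar - xt i‖ ^ 2
        ≤ inner ℝ (xbar - xstar) (g i) := by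
      rw [real_inner_comm]
      simp only [hg, inner_sub_right] at *
      linarith
    have h6 := mul_le_mul_of_nonneg_left h5 (by positivity : 0 ≤ 2 * γb)
    have h7 := mul_le_mul_of_nonneg_left h4 (by positivity : 0 ≤ γb ^ 2)
    have h8 := mul_le_mul_of_nonneg_left h3 (by positivity : 0 ≤ 2 * γb ^ 2)
    have h9 := mul_le_mul_of_nonneg_right hγL
      (by positivity : 0 ≤ 2 * γb * L * ‖xbar - xt i‖ ^ 2)
    have h10 : 0 ≤ γb * L * ‖xbar - xt i‖ ^ 2 := by positivity
    nlinarith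
  have hsum := mul_le_mul_of_nonneg_left (Finset.sum_le_sum fun i (_ : i ∈ Finset.univ) => key i)
    (inv_pos.2 hn0).le
  simp only [Finset.sum_add_distrib] at hsum
  simp only [← Finset.mul_sum] at hsum e4
  rw [e2]
  simp only [div_eq_mul_inv]
  linarith
end

section
/- Upper and lower bounds on FedDecSPS stepsizes (Lemma D.1): Let F_0, F_1, F_2, … : ℝ^d → ℝ be differentiable L-smooth functions each bounded below with ℓ* ≤ inf_x F_t(x) for all t, let (c_t)_{t≥0} be a nondecreasing positive sequence of reals with the convention c_{−1} := c_0, let γ_b > 0 and γ_{−1} := γ_b, and let x_0, x_1, x_2, … ∈ ℝ^d be arbitrary points with ∇F_t(x_t) ≠ 0. Define recursively γ_t := (1/c_t) min{(F_t(x_t) − ℓ*)/‖∇F_t(x_t)‖², c_{t−1} γ_{t−1}}. Then for all t ≥ 0: γ_t ≤ γ_{t−1}, and min{1/(2 c_t L), c_0 γ_b / c_t} ≤ γ_t ≤ c_0 γ_b / c_t. -/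
theorem smooth_ratio_aux {d : ℕ} (F : EuclideanSpace ℝ (Fin d) → ℝ)
    (L : ℝ) (hL : 0 < L) (hdiff : Differentiable ℝ F)
    (hsmooth : ∀ (x y : EuclideanSpace ℝ (Fin d)),
      ‖gradient F x - gradient F y‖ ≤ L * ‖x - y‖)
    (ℓ : ℝ) (hℓ : ∀ x, ℓ ≤ F x) (x : EuclideanSpace ℝ (Fin d)) (hx : gradient F x ≠ 0) :
    1 / (2 * L) ≤ (F x - ℓ) / ‖gradient F x‖ ^ 2 := by
  set g := gradient F x with hg
  have hgpos : 0 < ‖g‖ := norm_pos_iff.mpr hx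
  have hder : ∀ s : ℝ, HasDerivAt
      (fun s : ℝ => F (x - s • g) + s * ‖g‖ ^ 2 - L * s ^ 2 / 2 * ‖g‖ ^ 2)
      (-(inner ℝ (gradient F (x - s • g)) g) + ‖g‖ ^ 2 - L * s * ‖g‖ ^ 2) s := by
    intro s
    have h1 : HasDerivAt (fun s : ℝ => x - s • g) (-g) s := by
      simpa using ((hasDerivAt_id s).smul_const g).const_sub x
    have h2 := (hdiff (x - s • g)).hasGradientAt.hasFDerivAt.comp_hasDerivAt s h1
    have h3 : HasDerivAt (fun s : ℝ => s * ‖g‖ ^ 2) (‖g‖ ^ 2) s := by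
      simpa using (hasDerivAt_id s).mul_const (‖g‖ ^ 2)
    have h4 : HasDerivAt (fun s : ℝ => L * s ^ 2 / 2 * ‖g‖ ^ 2) (L * s * ‖g‖ ^ 2) s := by
      have := ((((hasDerivAt_id s).pow 2).const_mul L).div_const 2).mul_const (‖g‖ ^ 2)
      exact this.congr_deriv (by simp only [id]; push_cast; ring)
    exact ((h2.add h3).sub h4).congr_deriv (by simp)
  have hanti : AntitoneOn
      (fun s : ℝ => F (x - s • g) + s * ‖g‖ ^ 2 - L * s ^ 2 / 2 * ‖g‖ ^ 2) (Set.Ici 0) := by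
    apply antitoneOn_of_deriv_nonpos (convex_Ici 0)
    · exact fun s _ => (hder s).continuousAt.continuousWithinAt
    · exact fun s _ => (hder s).differentiableAt.differentiableWithinAt
    · intro s hs
      rw [interior_Ici] at hs
      have hs : 0 < s := hs
      rw [(hder s).deriv]
      have h1 := hsmooth x (x - s • g)
      rw [← hg, sub_sub_cancel, norm_smul, Real.norm_of_nonneg hs.le] at h1
      have h2 := real_inner_le_norm (g - gradient F (x - s • g)) g
      rw [inner_sub_left, real_inner_self_eq_norm_sq] at h2
      nlinarith
  have h := hanti (Set.mem_Ici.mpr le_rfl) (Set.mem_Ici.mpr (by positivity : 0 ≤ 1 / L))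
    (by positivity : 0 ≤ 1 / L)
  have h5 := hℓ (x - (1 / L) • g)
  have h6 : L * (1 / L) ^ 2 / 2 * ‖g‖ ^ 2 = 1 / (2 * L) * ‖g‖ ^ 2 := by field_simp
  have h7 : 1 / L * ‖g‖ ^ 2 = 2 * (1 / (2 * L) * ‖g‖ ^ 2) := by field_simp
  simp only [h6, h7] at h
  simp at h
  rw [le_div_iff₀ (by positivity)]
  simp at h5 ⊢
  linarith

/-- **Upper and lower bounds on FedDecSPS stepsizes (Lemma D.1).** -/
theorem feddecsps_stepsize_bounds
    {d : ℕ} (F : ℕ → EuclideanSpace ℝ (Fin d) → ℝ)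
    (L : ℝ) (hL : 0 < L)
    (hdiff : ∀ t, Differentiable ℝ (F t))
    (hsmooth : ∀ t (x y : EuclideanSpace ℝ (Fin d)),
      ‖gradient (F t) x - gradient (F t) y‖ ≤ L * ‖x - y‖)
    (hbdd : ∀ t, BddBelow (Set.range (F t)))
    (ℓ : ℝ) (hℓ : ∀ t x, ℓ ≤ F t x)
    (c : ℕ → ℝ) (hcpos : ∀ t, 0 < c t) (hcmono : ∀ t, c t ≤ c (t + 1))
    (γb : ℝ) (hγb : 0 < γb)
    (x : ℕ → EuclideanSpace ℝ (Fin d)) (hx : ∀ t, gradient (F t) (x t) ≠ 0)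
    (γ : ℕ → ℝ)
    (hγ0 : γ 0 = (c 0)⁻¹ *
      min ((F 0 (x 0) - ℓ) / ‖gradient (F 0) (x 0)‖ ^ 2) (c 0 * γb))
    (hγs : ∀ t, γ (t + 1) = (c (t + 1))⁻¹ *
      min ((F (t + 1) (x (t + 1)) - ℓ) / ‖gradient (F (t + 1)) (x (t + 1))‖ ^ 2)
        (c t * γ t)) :
    (γ 0 ≤ γb ∧ ∀ t, γ (t + 1) ≤ γ t) ∧
    ∀ t, min (1 / (2 * c t * L)) (c 0 * γb / c t) ≤ γ t ∧ γ t ≤ c 0 * γb / c t := by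
  have key := fun t => smooth_ratio_aux (F t) L hL (hdiff t) (hsmooth t) ℓ (hℓ t) (x t) (hx t)
  have hpos : 0 < 1 / (2 * L) := by positivity
  have main : ∀ t, min (1 / (2 * L)) (c 0 * γb) ≤ c t * γ t ∧ c t * γ t ≤ c 0 * γb := by
    intro t
    induction t with
    | zero =>
      rw [hγ0, mul_inv_cancel_left₀ (hcpos 0).ne']
      exact ⟨min_le_min_right _ (key 0), min_le_right _ _⟩
    | succ t ih =>
      rw [hγs, mul_inv_cancel_left₀ (hcpos (t + 1)).ne']
      exact ⟨le_min ((min_le_left _ _).trans (key (t + 1))) ih.1, (min_le_right _ _).trans ih.2⟩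
  have hγpos : ∀ t, 0 < γ t := by
    intro t
    have h1 : 0 < min (1 / (2 * L)) (c 0 * γb) := lt_min hpos (mul_pos (hcpos 0) hγb)
    exact pos_of_mul_pos_right (h1.trans_le (main t).1) (hcpos t).le
  refine ⟨⟨le_of_mul_le_mul_left (main 0).2 (hcpos 0), fun t => ?_⟩, fun t => ⟨?_, ?_⟩⟩
  · have h1 : c (t + 1) * γ (t + 1) ≤ c t * γ t := by
      rw [hγs, mul_inv_cancel_left₀ (hcpos (t + 1)).ne']
      exact min_le_right _ _
    exact le_of_mul_le_mul_left
      (h1.trans (mul_le_mul_of_nonneg_right (hcmono t) (hγpos t).le)) (hcpos (t + 1))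
  · have e : 1 / (2 * c t * L) = 1 / (2 * L) / c t := by
      have := (hcpos t).ne'
      field_simp
    rw [e, min_div_div_right (hcpos t).le, div_le_iff₀ (hcpos t), mul_comm (γ t)]
    exact (main t).1
  · rw [le_div_iff₀ (hcpos t), mul_comm (γ t)]
    exact (main t).2
end

section
/- Difference lemma for FedDecSPS (Lemma D.3, deterministic form): Let n ≥ 1, τ ≥ 1, and let (c_j) be positive reals. Let t_0 ≤ t with t − t_0 ≤ τ. For each client i ∈ {1,…,n} and each j ∈ {t_0,…,t−1}, let F_{i,j} : ℝ^d → ℝ be differentiable with F_{i,j}(x) ≥ ℓ_i* for all x. Suppose x_{t_0}^i = y for all i, and for j = t_0,…,t−1 the iterates evolve by x_{j+1}^i = x_j^i − γ_j^i g_j^i with g_j^i := ∇F_{i,j}(x_j^i), where the stepsizes satisfy the FedDecSPS inequalities ‖γ_j^i g_j^i‖² ≤ (γ_j^i/c_j)(F_{i,j}(x_j^i) − ℓ_i*) and γ_j^i ≤ c_0 γ_b / c_j. Then for every x* ∈ ℝ^d, with x̄_t := (1/n)Σ_i x_t^i: (1/n) Σ_{i=1}^n ‖x̄_t − x_t^i‖²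 ≤ (τ/n) Σ_{i=1}^n Σ_{j=t_0}^{t−1} (γ_j^i/c_j)(F_{i,j}(x_j^i) − F_{i,j}(x*)) + (c_0 γ_b τ/n) Σ_{i=1}^n Σ_{j=t_0}^{t−1} (1/c_j²)(F_{i,j}(x*) − ℓ_i*). -/
open Finset

theorem variance_aux {d n : ℕ} (hn : 1 ≤ n) (y : EuclideanSpace ℝ (Fin d))
    (z : Fin n → EuclideanSpace ℝ (Fin d)) :
    ∑ i, ‖((n : ℝ)⁻¹ • ∑ k, z k) - z i‖ ^ 2 ≤ ∑ i, ‖z i - y‖ ^ 2 := by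
  have hn0 : (n : ℝ) ≠ 0 := by positivity
  set m := (n : ℝ)⁻¹ • ∑ k, z k with hm
  have hs : ∑ k, z k = (n : ℝ) • m := by rw [hm, smul_smul, mul_inv_cancel₀ hn0, one_smul]
  have h1 : ∀ i, ‖z i - y‖ ^ 2 = ‖m - z i‖ ^ 2 - 2 * inner ℝ (m - z i) (m - y) + ‖m - y‖ ^ 2 := by
    intro i
    rw [← norm_sub_sq_real, ← norm_neg]
    congr 2
    abel
  have h2 : ∑ i, inner ℝ (m - z i) (m - y) = 0 := by
    rw [← sum_inner, Finset.sum_sub_distrib, hs]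
    simp [← Nat.cast_smul_eq_nsmul ℝ]
  simp only [h1, Finset.sum_add_distrib, Finset.sum_sub_distrib, ← Finset.mul_sum, h2]
  have : 0 ≤ ∑ i : Fin n, ‖m - y‖ ^ 2 := by positivity
  linarith

/-- **Difference lemma for FedDecSPS (Lemma D.3).** -/
theorem feddecsps_difference_lemma
    {d n : ℕ} (hn : 1 ≤ n) (τ : ℕ) (hτ : 1 ≤ τ)
    (c : ℕ → ℝ) (hc : ∀ j, 0 < c j) (γb : ℝ) (hγb : 0 < γb)
    (t0 t : ℕ) (ht0 : t0 ≤ t) (ht : t - t0 ≤ τ)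
    (F : Fin n → ℕ → EuclideanSpace ℝ (Fin d) → ℝ)
    (hdiff : ∀ i j, Differentiable ℝ (F i j))
    (ℓ : Fin n → ℝ) (hℓ : ∀ i j x, ℓ i ≤ F i j x)
    (y : EuclideanSpace ℝ (Fin d))
    (x : ℕ → Fin n → EuclideanSpace ℝ (Fin d)) (hxy : ∀ i, x t0 i = y)
    (γ : ℕ → Fin n → ℝ)
    (hγineq : ∀ j i, ‖γ j i • gradient (F i j) (x j i)‖ ^ 2
      ≤ γ j i / c j * (F i j (x j i) - ℓ i))
    (hγub : ∀ j i, γ j i ≤ c 0 * γb / c j)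
    (hx : ∀ j i, t0 ≤ j → j < t →
      x (j + 1) i = x j i - γ j i • gradient (F i j) (x j i))
    (xstar : EuclideanSpace ℝ (Fin d)) :
    (n : ℝ)⁻¹ * ∑ i, ‖((n : ℝ)⁻¹ • ∑ k, x t k) - x t i‖ ^ 2
      ≤ (τ : ℝ) / n * ∑ i, ∑ j ∈ Finset.Ico t0 t,
          γ j i / c j * (F i j (x j i) - F i j xstar)
        + c 0 * γb * τ / n * ∑ i, ∑ j ∈ Finset.Ico t0 t,
            1 / (c j) ^ 2 * (F i j xstar - ℓ i) := by
  have hn0 : (0 : ℝ) < n := by exact_mod_cast hn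
  have key : ∀ i, ‖x t i - y‖ ^ 2 ≤ (τ : ℝ) * ∑ j ∈ Finset.Ico t0 t,
      (γ j i / c j * (F i j (x j i) - F i j xstar)
        + c 0 * γb * (1 / (c j) ^ 2 * (F i j xstar - ℓ i))) := by
    intro i
    have h1 : x t i - y = ∑ j ∈ Finset.Ico t0 t, -(γ j i • gradient (F i j) (x j i)) := by
      rw [← hxy i, ← Finset.sum_Ico_sub (fun j => x j i) ht0]
      refine Finset.sum_congr rfl fun j hj => ?_
      rw [Finset.mem_Ico] at hj
      rw [hx j i hj.1 hj.2]
      abel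
    have h2 : ‖x t i - y‖ ≤ ∑ j ∈ Finset.Ico t0 t, ‖γ j i • gradient (F i j) (x j i)‖ := by
      rw [h1]
      refine (norm_sum_le _ _).trans (le_of_eq ?_)
      simp only [norm_neg]
    have h3 : ‖x t i - y‖ ^ 2 ≤ ((t - t0 : ℕ) : ℝ) *
        ∑ j ∈ Finset.Ico t0 t, ‖γ j i • gradient (F i j) (x j i)‖ ^ 2 := by
      refine (pow_le_pow_left₀ (norm_nonneg _) h2 2).trans ?_
      have := sq_sum_le_card_mul_sum_sq (s := Finset.Ico t0 t)
        (f := fun j => ‖γ j i • gradient (F i j) (x j i)‖)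
      rwa [Nat.card_Ico] at this
    have h4 : ((t - t0 : ℕ) : ℝ) ≤ τ := by exact_mod_cast ht
    refine h3.trans ((mul_le_mul_of_nonneg_right h4
      (Finset.sum_nonneg fun j _ => sq_nonneg _)).trans ?_)
    refine mul_le_mul_of_nonneg_left (Finset.sum_le_sum fun j _ => ?_) (Nat.cast_nonneg _)
    refine (hγineq j i).trans ?_
    have h5 : γ j i / c j ≤ c 0 * γb * (1 / (c j) ^ 2) := by
      refine (div_le_div_of_nonneg_right (hγub j i) (hc j).le).trans (le_of_eq ?_)
      have := (hc j).ne'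
      field_simp
    have h6 := mul_le_mul_of_nonneg_right h5 (sub_nonneg.2 (hℓ i j xstar))
    linarith
  have h := (variance_aux hn y (x t)).trans (Finset.sum_le_sum fun i _ => key i)
  refine (mul_le_mul_of_nonneg_left h (inv_nonneg.2 hn0.le)).trans (le_of_eq ?_)
  simp only [Finset.sum_add_distrib, ← Finset.mul_sum]
  ring
end
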